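/- For every ε > 0, every A > 0 and every n₀ ∈ ℕ there exist a harmonic function u : ℤ² → ℂ and a natural number n > n₀ such that Q_u(2n) > A·√(Q_u(n)·Q_u(4n)) + 2^{-n^{1/2+ε}}·Q_u(4n). -/

import Mathlib

open Finset

noncomputable section

/-- The generating set `S = {(1,0),(-1,0),(0,1),(0,-1)}` of ℤ². -/
def Sfin : Finset (ℤ × ℤ) := {(1,0), (-1,0), (0,1), (0,-1)}

/-- `Q u n = E |u(S_n)|²` for the simple random walk on ℤ² started at 0. -/
noncomputable def Q (u : ℤ × ℤ → ℂ) (n : ℕ) : ℝ :=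
  (4 : ℝ)⁻¹ ^ n * ∑ s ∈ Fintype.piFinset (fun _ : Fin n => Sfin), ‖u (∑ i, s i)‖ ^ 2

/-- The discrete Laplacian on ℤ². -/
noncomputable def lap2 (u : ℤ × ℤ → ℂ) : ℤ × ℤ → ℂ :=
  fun x => (4 : ℂ)⁻¹ * ∑ s ∈ Sfin, (u (x + s) - u x)

/-!
The Taylor coefficients `harmonicPoly d` of the exponential solution of the discrete Laplace
equation are harmonic polynomials. A unit step multiplies the exponential by a fixed power series
in `ωt`, with `ω` a fourth root of unity, so Parseval over the fourth roots of unity yields an exact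
recursion in `n` for `Q`. Two of its modes give `8 ^ d * (2n).choose d` as a lower bound, and
Cauchy's estimate on the circle `|t|² = ρ` gives the upper bound
`(1 + 16ρ / (1 - 2ρ)²) ^ n / ρ ^ d`. With `ρ = d / (16n)` and `d³ ≤ n²`, both equal
`(16n / d) ^ d * exp (d - d² / (4n))` up to a factor polynomial in `d`.

The power `(16n / d) ^ d` is geometric along `n, 2n, 4n`, but `-d² / (4n)` is strictly concave in
`log n`, so `Q (2n)` exceeds `√(Q n * Q (4n))` by a factor `exp (d² / (32n))` up to that polynomial
error. For `d = n ^ (1/2 + δ)` this beats every constant, and since `Q (4n) / Q (2n)` is only about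
`2 ^ d`, the error term is negligible as soon as `δ < ε`.
-/

lemma sum_piFinset_const_succ {α M : Type*} [AddCommMonoid M] (S : Finset α) (n : ℕ)
    (f : (Fin (n + 1) → α) → M) :
    ∑ p ∈ Fintype.piFinset (fun _ : Fin (n + 1) => S), f p =
      ∑ p ∈ Fintype.piFinset (fun _ : Fin n => S), ∑ s ∈ S, f (Fin.snoc p s) := by
  rw [← Finset.sum_product_right']
  refine (Finset.sum_equiv (Fin.snocEquiv fun _ => α) (fun q => ?_) fun q _ => rfl).symm
  simp [Fin.forall_fin_succ', and_comm]

section RandomWalk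

lemma Q_nonneg (u : ℤ × ℤ → ℂ) (n : ℕ) : 0 ≤ Q u n := by
  unfold Q; positivity

lemma Q_zero (u : ℤ × ℤ → ℂ) : Q u 0 = ‖u 0‖ ^ 2 := by
  simp [Q]

lemma Q_const_smul (c : ℂ) (u : ℤ × ℤ → ℂ) (n : ℕ) : Q (c • u) n = ‖c‖ ^ 2 * Q u n := by
  simp only [Q, Pi.smul_apply, norm_smul, mul_pow, ← Finset.mul_sum]
  ring

lemma Q_succ (u : ℤ × ℤ → ℂ) (n : ℕ) :
    Q u (n + 1) = (4 : ℝ)⁻¹ ^ n * ∑ p ∈ Fintype.piFinset (fun _ : Fin n => Sfin),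
      4⁻¹ * ∑ s ∈ Sfin, ‖u (∑ i, p i + s)‖ ^ 2 := by
  simp only [Q, sum_piFinset_const_succ, Fin.sum_snoc, pow_succ, ← Finset.mul_sum, mul_assoc]

/-- The step `s` viewed as a complex number, `(x, y)` being `x + iy`. On `Sfin` it runs over the
fourth roots of unity, the characters against which increments are expanded. -/
def direction (s : ℤ × ℤ) : ℂ := s.1 + s.2 * Complex.I

lemma sum_Sfin_direction {M : Type*} [AddCommMonoid M] (f : ℂ → M) :
    ∑ s ∈ Sfin, f (direction s) = f 1 + f (-1) + (f Complex.I + f (-Complex.I)) := by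
  simp [Sfin, direction, add_assoc]

lemma direction_pow_four {s : ℤ × ℤ} (hs : s ∈ Sfin) : direction s ^ 4 = 1 := by
  simp only [Sfin, mem_insert, mem_singleton] at hs
  rcases hs with rfl | rfl | rfl | rfl <;> simp [direction, (by decide : Even 4).neg_pow]

lemma sum_norm_sq_direction (a b c e : ℂ) :
    ∑ s ∈ Sfin, ‖a + direction s * b + direction s ^ 2 * c + direction s ^ 3 * e‖ ^ 2 =
      4 * (‖a‖ ^ 2 + ‖b‖ ^ 2 + ‖c‖ ^ 2 + ‖e‖ ^ 2) := by
  have real_axis := parallelogram_law_with_norm_mul ℂ (a + c) (b + e)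
  have imaginary_axis := parallelogram_law_with_norm_mul ℂ (a - c) (Complex.I * (b - e))
  have even_part := parallelogram_law_with_norm_mul ℂ a c
  have odd_part := parallelogram_law_with_norm_mul ℂ b e
  rw [norm_mul, Complex.norm_I, one_mul] at imaginary_axis
  have h_one : a + 1 * b + 1 ^ 2 * c + 1 ^ 3 * e = a + c + (b + e) := by ring
  have h_neg_one : a + -1 * b + (-1) ^ 2 * c + (-1) ^ 3 * e = a + c - (b + e) := by ring
  have h_I : a + Complex.I * b + Complex.I ^ 2 * c + Complex.I ^ 3 * e =
      a - c + Complex.I * (b - e) := by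
    linear_combination (c + Complex.I * e) * Complex.I_sq
  have h_neg_I : a + -Complex.I * b + (-Complex.I) ^ 2 * c + (-Complex.I) ^ 3 * e =
      a - c - Complex.I * (b - e) := by
    linear_combination (c - Complex.I * e) * Complex.I_sq
  rw [sum_Sfin_direction fun ω => ‖a + ω * b + ω ^ 2 * c + ω ^ 3 * e‖ ^ 2,
    h_one, h_neg_one, h_I, h_neg_I]
  linarith

/-- The increments of `u` along the four unit steps have the discrete Fourier coefficients
`0`, `a`, `b`, `c` with respect to `direction`; that the first one vanishes is harmonicity. -/
def HasFourierIncrements (u a b c : ℤ × ℤ → ℂ) : Prop :=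
  ∀ x, ∀ s ∈ Sfin,
    u (x + s) = u x + direction s * a x + direction s ^ 2 * b x + direction s ^ 3 * c x

namespace HasFourierIncrements

variable {u a b c : ℤ × ℤ → ℂ}

lemma lap2_eq_zero (h : HasFourierIncrements u a b c) : lap2 u = 0 := by
  funext x
  have hsum : ∑ s ∈ Sfin, (u (x + s) - u x) =
      ∑ s ∈ Sfin, (direction s * a x + direction s ^ 2 * b x + direction s ^ 3 * c x) :=
    Finset.sum_congr rfl fun s hs => by rw [h x s hs]; ring
  rw [lap2, hsum, sum_Sfin_direction fun ω => ω * a x + ω ^ 2 * b x + ω ^ 3 * c x, Pi.zero_apply]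
  linear_combination (b x / 2) * Complex.I_sq

lemma Q_succ_eq (h : HasFourierIncrements u a b c) (n : ℕ) :
    Q u (n + 1) = Q u n + Q a n + Q b n + Q c n := by
  have mean_sq (x : ℤ × ℤ) :
      4⁻¹ * ∑ s ∈ Sfin, ‖u (x + s)‖ ^ 2 = ‖u x‖ ^ 2 + ‖a x‖ ^ 2 + ‖b x‖ ^ 2 + ‖c x‖ ^ 2 := by
    rw [Finset.sum_congr rfl fun s hs => by rw [h x s hs], sum_norm_sq_direction,
      inv_mul_cancel_left₀ four_ne_zero]
  rw [Q_succ]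
  simp only [mean_sq, Q, Finset.sum_add_distrib, mul_add]

end HasFourierIncrements

end RandomWalk

section DiscreteExponential

open PowerSeries

/-- The power series `1 / (1 + 4t⁴)`, the common factor of the Fourier modes of all four steps. -/
def quarticInv : ℂ⟦X⟧ := (1 + 4 * X ^ 4)⁻¹

lemma quarticInv_mul : quarticInv * (1 + 4 * X ^ 4) = 1 :=
  PowerSeries.inv_mul_cancel _ (by simp)

lemma constantCoeff_quarticInv : constantCoeff quarticInv = 1 := by
  simp [quarticInv]

lemma rescale_quarticInv {ω : ℂ} (hω : ω ^ 4 = 1) : rescale ω quarticInv = quarticInv := by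
  have hden : rescale ω (1 + 4 * X ^ 4 : ℂ⟦X⟧) = 1 + 4 * X ^ 4 := by
    simp only [map_add, map_one, map_mul, map_pow, map_ofNat, rescale_X, mul_pow]
    rw [← map_pow C, hω, map_one, one_mul]
  have hinv : rescale ω quarticInv * (1 + 4 * X ^ 4) = 1 := by
    rw [← hden, ← map_mul, quarticInv_mul, map_one]
  exact mul_right_cancel₀ (right_ne_zero_of_mul_eq_one hinv) (hinv.trans quarticInv_mul.symm)

/-- The multiplier `(1 + 2t + 2t²) / (1 - 2t + 2t²)` of the discrete exponential under the step
`(1, 0)`, put over the denominator `1 + 4t⁴` by Sophie Germain's factorisation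
`1 + 4t⁴ = (1 + 2t + 2t²) (1 - 2t + 2t²)`. -/
def stepMultiplier : ℂ⟦X⟧ˣ :=
  Units.mkOfMulEqOne ((1 + 2 * X + 2 * X ^ 2) ^ 2 * quarticInv)
    ((1 - 2 * X + 2 * X ^ 2) ^ 2 * quarticInv) <| by
    linear_combination (quarticInv * (1 + 4 * X ^ 4) + 1) * quarticInv_mul

lemma coe_stepMultiplier :
    (stepMultiplier : ℂ⟦X⟧) = 1 + (4 * X + 8 * X ^ 2 + 8 * X ^ 3) * quarticInv := by
  rw [stepMultiplier, Units.val_mkOfMulEqOne]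
  linear_combination quarticInv_mul

lemma rescale_stepMultiplier {ω : ℂ} (hω : ω ^ 4 = 1) :
    rescale ω (stepMultiplier : ℂ⟦X⟧) =
      1 + (C ω * (4 * X) + C ω ^ 2 * (8 * X ^ 2) + C ω ^ 3 * (8 * X ^ 3)) * quarticInv := by
  simp only [coe_stepMultiplier, map_add, map_mul, map_one, map_pow, map_ofNat, rescale_X,
    rescale_quarticInv hω]
  ring

lemma coe_inv_stepMultiplier :
    (↑stepMultiplier⁻¹ : ℂ⟦X⟧) = rescale (-1) (stepMultiplier : ℂ⟦X⟧) := by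
  have hinv : (↑stepMultiplier⁻¹ : ℂ⟦X⟧) = (1 - 2 * X + 2 * X ^ 2) ^ 2 * quarticInv := rfl
  rw [rescale_stepMultiplier (by norm_num), hinv, map_neg, map_one]
  linear_combination quarticInv_mul

/-- The exponential solution of the discrete Laplace equation, as a power series in its
parameter. The multiplier under `(0, 1)` is the one under `(1, 0)` with `t` replaced by `it`. -/
def discreteExp (x : ℤ × ℤ) : ℂ⟦X⟧ˣ :=
  stepMultiplier ^ x.1 * Units.map (rescale Complex.I : ℂ⟦X⟧ →* ℂ⟦X⟧) stepMultiplier ^ x.2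

lemma discreteExp_zero : discreteExp 0 = 1 := by
  simp [discreteExp]

lemma discreteExp_add (x y : ℤ × ℤ) : discreteExp (x + y) = discreteExp x * discreteExp y := by
  simp only [discreteExp, Prod.fst_add, Prod.snd_add, zpow_add, mul_mul_mul_comm]

lemma coe_discreteExp_of_mem {s : ℤ × ℤ} (hs : s ∈ Sfin) :
    (discreteExp s : ℂ⟦X⟧) = rescale (direction s) (stepMultiplier : ℂ⟦X⟧) := by
  simp only [Sfin, mem_insert, mem_singleton] at hs
  rcases hs with rfl | rfl | rfl | rfl
  · simp [discreteExp, direction]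
  · simp [discreteExp, direction, coe_inv_stepMultiplier]
  · simp [discreteExp, direction]
  · simp [discreteExp, direction, ← map_inv, coe_inv_stepMultiplier, rescale_rescale]

/-- The `d`-th Taylor coefficient of `G` times the discrete exponential, as a function on ℤ². The
weight `G` makes the family closed under taking Fourier modes of increments. -/
def expCoeff (d : ℕ) (G : ℂ⟦X⟧) (x : ℤ × ℤ) : ℂ := coeff d (G * discreteExp x)

lemma expCoeff_zero_right (d : ℕ) (G : ℂ⟦X⟧) : expCoeff d G 0 = coeff d G := by
  simp [expCoeff, discreteExp_zero]

lemma expCoeff_X_mul (d : ℕ) (G : ℂ⟦X⟧) : expCoeff (d + 1) (X * G) = expCoeff d G := by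
  funext x
  rw [expCoeff, mul_assoc, coeff_succ_X_mul, expCoeff]

lemma hasFourierIncrements_expCoeff (d : ℕ) (G : ℂ⟦X⟧) :
    HasFourierIncrements (expCoeff d G) ((4 : ℂ) • expCoeff d (X * (G * quarticInv)))
      ((8 : ℂ) • expCoeff d (X ^ 2 * (G * quarticInv)))
      ((8 : ℂ) • expCoeff d (X ^ 3 * (G * quarticInv))) := by
  intro x s hs
  have hexpand : G * (discreteExp (x + s) : ℂ⟦X⟧) =
      G * (discreteExp x : ℂ⟦X⟧)
        + C (direction s * 4) * (X * (G * quarticInv) * (discreteExp x : ℂ⟦X⟧))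
        + C (direction s ^ 2 * 8) * (X ^ 2 * (G * quarticInv) * (discreteExp x : ℂ⟦X⟧))
        + C (direction s ^ 3 * 8) * (X ^ 3 * (G * quarticInv) * (discreteExp x : ℂ⟦X⟧)) := by
    rw [discreteExp_add, Units.val_mul, coe_discreteExp_of_mem hs,
      rescale_stepMultiplier (direction_pow_four hs)]
    simp only [map_mul, map_pow, map_ofNat]
    ring
  simp only [expCoeff, hexpand, map_add, coeff_C_mul, Pi.smul_apply, smul_eq_mul, mul_assoc]

lemma lap2_expCoeff (d : ℕ) (G : ℂ⟦X⟧) : lap2 (expCoeff d G) = 0 :=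
  (hasFourierIncrements_expCoeff d G).lap2_eq_zero

lemma Q_expCoeff_succ (d n : ℕ) (G : ℂ⟦X⟧) :
    Q (expCoeff d G) (n + 1) = Q (expCoeff d G) n
      + 16 * Q (expCoeff d (X * (G * quarticInv))) n
      + 64 * Q (expCoeff d (X ^ 2 * (G * quarticInv))) n
      + 64 * Q (expCoeff d (X ^ 3 * (G * quarticInv))) n := by
  rw [(hasFourierIncrements_expCoeff d G).Q_succ_eq]
  simp only [Q_const_smul, Complex.norm_ofNat]
  norm_num

lemma choose_add_two_add_two (n k : ℕ) :
    (n + 2).choose (k + 2) = n.choose (k + 2) + 2 * n.choose (k + 1) + n.choose k := by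
  simp only [Nat.choose_succ_succ]
  ring

/-- Keeping only the two lowest Fourier modes of every step turns the recursion for `Q` into that
for the coefficients of `(1 + 16y + 64y²)ⁿ = (1 + 8y)²ⁿ`. -/
lemma le_Q_expCoeff (n d : ℕ) (G : ℂ⟦X⟧) :
    8 ^ d * (2 * n).choose d * ‖constantCoeff G‖ ^ 2 ≤ Q (expCoeff d G) n := by
  induction n generalizing d G with
  | zero =>
    cases d with
    | zero => simp [Q_zero, expCoeff_zero_right]
    | succ d => simpa using Q_nonneg _ _
  | succ n ih =>
    have hconst : constantCoeff (G * quarticInv) = constantCoeff G := by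
      rw [map_mul, constantCoeff_quarticInv, mul_one]
    have hkeep := ih d G
    have hQ₁ := Q_nonneg (expCoeff d (X * (G * quarticInv))) n
    have hQ₂ := Q_nonneg (expCoeff d (X ^ 2 * (G * quarticInv))) n
    have hQ₃ := Q_nonneg (expCoeff d (X ^ 3 * (G * quarticInv))) n
    rw [Q_expCoeff_succ]
    match d with
    | 0 =>
      simp only [Nat.choose_zero_right] at hkeep ⊢
      linarith
    | 1 =>
      have hshift := ih 0 (G * quarticInv)
      rw [← expCoeff_X_mul, hconst] at hshift
      simp only [Nat.choose_zero_right, Nat.choose_one_right] at hkeep hshift ⊢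
      push_cast at hkeep hshift ⊢
      linarith
    | d + 2 =>
      have hshift₁ := ih (d + 1) (G * quarticInv)
      have hshift₂ := ih d (G * quarticInv)
      rw [← expCoeff_X_mul, hconst] at hshift₁
      rw [← expCoeff_X_mul, ← expCoeff_X_mul, ← mul_assoc X X, ← pow_two, hconst] at hshift₂
      rw [mul_add_one 2 n, choose_add_two_add_two]
      push_cast
      linear_combination hkeep + 16 * hshift₁ + 64 * hshift₂ + 64 * hQ₃

lemma norm_coeff_X_pow_mul_le {G : ℂ⟦X⟧} {B r : ℝ} (hr : 0 ≤ r)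
    (hG : ∀ j, ‖coeff j G‖ * r ^ j ≤ B) (k j : ℕ) :
    ‖coeff j (X ^ k * G)‖ * r ^ j ≤ r ^ k * B := by
  rw [coeff_X_pow_mul']
  split_ifs with hkj
  · calc ‖coeff (j - k) G‖ * r ^ j = r ^ k * (‖coeff (j - k) G‖ * r ^ (j - k)) := by
          rw [← Nat.sub_add_cancel hkj, pow_add, Nat.add_sub_cancel]; ring
      _ ≤ r ^ k * B := by gcongr; exact hG _
  · have hB : 0 ≤ B := le_trans (by positivity) (hG 0)
    simpa using by positivity

lemma norm_coeff_mul_quarticInv_le {G : ℂ⟦X⟧} {B r : ℝ} (hr : 0 ≤ r) (hr4 : 4 * r ^ 4 < 1)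
    (hG : ∀ j, ‖coeff j G‖ * r ^ j ≤ B) (j : ℕ) :
    ‖coeff j (G * quarticInv)‖ * r ^ j ≤ B / (1 - 4 * r ^ 4) := by
  have hB : 0 ≤ B := le_trans (by positivity) (hG 0)
  have hq : 0 < 1 - 4 * r ^ 4 := by linarith
  have hrec : G * quarticInv = G - C 4 * (X ^ 4 * (G * quarticInv)) := by
    rw [map_ofNat]
    linear_combination G * quarticInv_mul
  induction j using Nat.strong_induction_on with
  | _ j ih =>
    rw [hrec, map_sub, coeff_C_mul, coeff_X_pow_mul']
    split_ifs with hj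
    · obtain ⟨i, rfl⟩ := Nat.exists_eq_add_of_le' hj
      rw [Nat.add_sub_cancel]
      calc ‖coeff (i + 4) G - 4 * coeff i (G * quarticInv)‖ * r ^ (i + 4)
          ≤ (‖coeff (i + 4) G‖ + ‖4 * coeff i (G * quarticInv)‖) * r ^ (i + 4) := by
            gcongr; exact norm_sub_le _ _
        _ = ‖coeff (i + 4) G‖ * r ^ (i + 4)
              + 4 * r ^ 4 * (‖coeff i (G * quarticInv)‖ * r ^ i) := by
            rw [norm_mul, Complex.norm_ofNat]; ring
        _ ≤ B + 4 * r ^ 4 * (B / (1 - 4 * r ^ 4)) := by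
            gcongr
            · exact hG _
            · exact ih i (by omega)
        _ = B / (1 - 4 * r ^ 4) := by field_simp; ring
    · rw [mul_zero, sub_zero, le_div_iff₀ hq]
      nlinarith [hG j, mul_nonneg hB (pow_nonneg hr 4)]

/-- Cauchy's estimate on the circle of radius `r` propagates along the recursion for `Q`. -/
lemma Q_expCoeff_mul_le {r : ℝ} (hr : 0 ≤ r) (hr2 : 2 * r ^ 2 < 1) (n d : ℕ) {G : ℂ⟦X⟧} {B : ℝ}
    (hG : ∀ j, ‖coeff j G‖ * r ^ j ≤ B) :
    Q (expCoeff d G) n * (r ^ d) ^ 2 ≤ (1 + 16 * r ^ 2 / (1 - 2 * r ^ 2) ^ 2) ^ n * B ^ 2 := by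
  induction n generalizing G B with
  | zero =>
    rw [Q_zero, expCoeff_zero_right, pow_zero, one_mul, ← mul_pow]
    gcongr
    exact hG d
  | succ n ih =>
    have hminus : 0 < 1 - 2 * r ^ 2 := by linarith
    have hplus : 0 < 1 + 2 * r ^ 2 := by positivity
    have hfactor : 1 - 4 * r ^ 4 = (1 - 2 * r ^ 2) * (1 + 2 * r ^ 2) := by ring
    have hr4 : 4 * r ^ 4 < 1 := by nlinarith
    have hM : 1 + (16 * r ^ 2 + 64 * r ^ 4 + 64 * r ^ 6) / (1 - 4 * r ^ 4) ^ 2 =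
        1 + 16 * r ^ 2 / (1 - 2 * r ^ 2) ^ 2 := by
      rw [hfactor]
      field_simp
      ring
    rw [← hM] at ih ⊢
    have hmode (k : ℕ) := ih (norm_coeff_X_pow_mul_le hr (norm_coeff_mul_quarticInv_le hr hr4 hG) k)
    have hmode₁ := hmode 1
    rw [pow_one, pow_one] at hmode₁
    rw [Q_expCoeff_succ]
    generalize 1 - 4 * r ^ 4 = q at *
    linear_combination ih hG + 16 * hmode₁ + 64 * hmode 2 + 64 * hmode 3

/-- The harmonic polynomial of degree `d` on ℤ² generated by the discrete exponential. -/
def harmonicPoly (d : ℕ) : ℤ × ℤ → ℂ := expCoeff d 1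

lemma lap2_harmonicPoly (d : ℕ) : lap2 (harmonicPoly d) = 0 := lap2_expCoeff d 1

lemma choose_le_Q_harmonicPoly (d n : ℕ) : 8 ^ d * (2 * n).choose d ≤ Q (harmonicPoly d) n := by
  simpa [harmonicPoly] using le_Q_expCoeff n d 1

lemma Q_harmonicPoly_le (d n : ℕ) {ρ : ℝ} (hρ : 0 < ρ) (hρ2 : 2 * ρ < 1) :
    Q (harmonicPoly d) n ≤ (1 + 16 * ρ / (1 - 2 * ρ) ^ 2) ^ n / ρ ^ d := by
  have hsq : √ρ ^ 2 = ρ := Real.sq_sqrt hρ.le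
  have hone (j : ℕ) : ‖coeff j (1 : ℂ⟦X⟧)‖ * √ρ ^ j ≤ 1 := by
    rw [coeff_one]
    split_ifs with hj <;> simp [hj]
  have h := Q_expCoeff_mul_le (Real.sqrt_nonneg ρ) (by rwa [hsq]) n d hone
  rw [le_div_iff₀ (by positivity)]
  rwa [hsq, one_pow, mul_one, pow_right_comm, hsq] at h

end DiscreteExponential

section ElementaryEstimates

lemma one_add_le_exp_cubic {z : ℝ} (hz : 0 ≤ z) : 1 + z ≤ Real.exp (z - z ^ 2 / 2 + z ^ 3 / 2) := by
  have hfactor : z - z ^ 2 / 2 + z ^ 3 / 2 = z * (1 + (z ^ 2 - z) / 2) := by ring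
  have hnonneg : 0 ≤ z - z ^ 2 / 2 + z ^ 3 / 2 := by
    rw [hfactor]
    exact mul_nonneg hz (by nlinarith [sq_nonneg (z - 1 / 2)])
  have hsq : z ^ 2 * (1 + (z ^ 2 - z)) ≤ (z - z ^ 2 / 2 + z ^ 3 / 2) ^ 2 := by
    rw [hfactor, mul_pow]
    gcongr
    linarith [sq_nonneg ((z ^ 2 - z) / 2)]
  linarith [Real.quadratic_le_exp_of_nonneg hnonneg, pow_nonneg hz 4]

lemma one_add_div_sq_le_exp_cubic {ρ : ℝ} (hρ : 0 ≤ ρ) (hρ' : ρ ≤ 1 / 16) :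
    1 + 16 * ρ / (1 - 2 * ρ) ^ 2 ≤ Real.exp (16 * ρ - 64 * ρ ^ 2 + 768 * ρ ^ 3) := by
  have hquot : 16 * ρ / (1 - 2 * ρ) ^ 2 ≤ 16 * ρ + 64 * ρ ^ 2 + 256 * ρ ^ 3 := by
    rw [div_le_iff₀ (by nlinarith)]
    have : 0 ≤ 64 * ρ ^ 3 * (1 - 12 * ρ + 16 * ρ ^ 2) :=
      mul_nonneg (by positivity) (by nlinarith)
    linarith
  calc 1 + 16 * ρ / (1 - 2 * ρ) ^ 2
      ≤ 1 + (16 * ρ + 64 * ρ ^ 2 + 256 * ρ ^ 3) := by gcongr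
    _ ≤ (1 + 8 * ρ) ^ 2 * (256 * ρ ^ 3 + 1) := by
        linarith [show 0 ≤ 256 * ρ ^ 3 * (16 * ρ + 64 * ρ ^ 2) by positivity]
    _ ≤ Real.exp (8 * ρ - (8 * ρ) ^ 2 / 2 + (8 * ρ) ^ 3 / 2) ^ 2 * Real.exp (256 * ρ ^ 3) := by
        gcongr
        · exact one_add_le_exp_cubic (by positivity)
        · exact Real.add_one_le_exp _
    _ = Real.exp (16 * ρ - 64 * ρ ^ 2 + 768 * ρ ^ 3) := by
        rw [← Real.exp_nat_mul, ← Real.exp_add]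
        push_cast
        ring_nf

lemma factorial_le_mul_exp {d : ℕ} (hd : d ≠ 0) :
    (d.factorial : ℝ) ≤ d * (d : ℝ) ^ d * Real.exp (1 - d) := by
  have hstirling : Stirling.stirlingSeq d ≤ Real.exp 1 / √2 := by
    obtain ⟨m, rfl⟩ := Nat.exists_eq_succ_of_ne_zero hd
    simpa [Stirling.stirlingSeq_one] using Stirling.stirlingSeq'_antitone (Nat.zero_le m)
  have hsqrt : √(d : ℝ) ≤ d :=
    Real.sqrt_le_iff.mpr ⟨d.cast_nonneg, by exact_mod_cast Nat.le_self_pow two_ne_zero d⟩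
  rw [Stirling.stirlingSeq, div_le_iff₀ (by positivity)] at hstirling
  calc (d.factorial : ℝ) ≤ Real.exp 1 / √2 * (√(2 * d) * (d / Real.exp 1) ^ d) := hstirling
    _ = √d * d ^ d * Real.exp (1 - d) := by
        rw [Real.sqrt_mul zero_le_two, div_pow, ← Real.exp_nat_mul, mul_one, Real.exp_sub]
        field_simp
    _ ≤ d * d ^ d * Real.exp (1 - d) := by gcongr

lemma exp_neg_le_one_sub {x : ℝ} (hx : x ≤ 1 / 2) :
    Real.exp (-x - 2 * x ^ 2) ≤ 1 - x := by
  have hpos : 0 < 1 - x := by linarith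
  rw [← Real.le_log_iff_exp_le hpos]
  refine le_trans ?_ (Real.one_sub_inv_le_log_of_pos hpos)
  rw [← sub_nonneg]
  have : 1 - (1 - x)⁻¹ - (-x - 2 * x ^ 2) = x ^ 2 * (1 - 2 * x) / (1 - x) := by
    field_simp
    ring
  rw [this]
  exact div_nonneg (mul_nonneg (sq_nonneg x) (by linarith)) hpos.le

lemma pow_mul_exp_le_descFactorial {d M : ℕ} (hdM : 2 * d ≤ M) :
    (M : ℝ) ^ d * Real.exp (-(d ^ 2 / (2 * M)) - d ^ 3 / M ^ 2) ≤ M.descFactorial d := by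
  induction d with
  | zero => simp
  | succ d ih =>
    have hM : (0 : ℝ) < M := by exact_mod_cast (by omega : 0 < M)
    have hhalf : (d : ℝ) / M ≤ 1 / 2 := by
      rw [div_le_div_iff₀ hM two_pos]
      exact_mod_cast (by omega : d * 2 ≤ 1 * M)
    have hexponent : -(((d + 1 : ℕ) : ℝ) ^ 2 / (2 * M)) - ((d + 1 : ℕ) : ℝ) ^ 3 / M ^ 2 ≤
        -(d / M : ℝ) - 2 * (d / M) ^ 2 + (-(d ^ 2 / (2 * M)) - d ^ 3 / M ^ 2) := by
      rw [← sub_nonneg]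
      have : -(d / M : ℝ) - 2 * (d / M) ^ 2 + (-(d ^ 2 / (2 * M)) - d ^ 3 / M ^ 2)
          - (-(((d + 1 : ℕ) : ℝ) ^ 2 / (2 * M)) - ((d + 1 : ℕ) : ℝ) ^ 3 / M ^ 2) =
          1 / (2 * M) + (d ^ 2 + 3 * d + 1) / M ^ 2 := by
        push_cast
        field_simp
        ring
      rw [this]
      positivity
    calc (M : ℝ) ^ (d + 1) * Real.exp (-(((d + 1 : ℕ) : ℝ) ^ 2 / (2 * M))
          - ((d + 1 : ℕ) : ℝ) ^ 3 / M ^ 2)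
        ≤ (M : ℝ) ^ (d + 1) * Real.exp (-(d / M : ℝ) - 2 * (d / M) ^ 2
            + (-(d ^ 2 / (2 * M)) - d ^ 3 / M ^ 2)) := by gcongr
      _ = M * Real.exp (-(d / M : ℝ) - 2 * (d / M) ^ 2)
            * (M ^ d * Real.exp (-(d ^ 2 / (2 * M)) - d ^ 3 / M ^ 2)) := by
          rw [Real.exp_add]; ring
      _ ≤ M * (1 - d / M) * M.descFactorial d := by
          gcongr
          · exact mul_nonneg hM.le (by linarith)
          · exact exp_neg_le_one_sub hhalf
          · exact ih (by omega)
      _ = M.descFactorial (d + 1) := by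
          rw [Nat.descFactorial_succ, Nat.cast_mul, Nat.cast_sub (by omega)]
          field_simp

end ElementaryEstimates

section GrowthOfHarmonicPoly

/-- The size of `Q (harmonicPoly d) x` up to a factor polynomial in `d`, in the range
`d³ ≤ x²`. The time `x` is real so that it can be doubled without casts. -/
def leadingTerm (d : ℕ) (x : ℝ) : ℝ := (16 * x / d) ^ d * Real.exp (d - d ^ 2 / (4 * x))

lemma leadingTerm_pos (d : ℕ) {x : ℝ} (hx : 0 < x) : 0 < leadingTerm d x := by
  rcases d.eq_zero_or_pos with rfl | hd
  · simp [leadingTerm]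
  · unfold leadingTerm
    positivity

lemma leadingTerm_mul_leadingTerm (d : ℕ) (x : ℝ) :
    leadingTerm d x * leadingTerm d (4 * x) =
      (leadingTerm d (2 * x) * Real.exp (-(d ^ 2 / x / 32))) ^ 2 := by
  have hexp : Real.exp (d - d ^ 2 / (4 * x)) * Real.exp (d - d ^ 2 / (4 * (4 * x))) =
      (Real.exp (d - d ^ 2 / (4 * (2 * x))) * Real.exp (-(d ^ 2 / x / 32))) ^ 2 := by
    rw [← Real.exp_add, ← Real.exp_add, ← Real.exp_nat_mul]
    push_cast
    ring_nf
  have hpow : (16 * x / d) ^ d * (16 * (4 * x) / d) ^ d = ((16 * (2 * x) / d) ^ d) ^ 2 := by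
    rw [← mul_pow, pow_right_comm]
    ring_nf
  simp only [leadingTerm]
  rw [mul_mul_mul_comm, hexp, hpow]
  ring

lemma leadingTerm_four_mul (d : ℕ) (x : ℝ) :
    leadingTerm d (4 * x) = 2 ^ d * Real.exp (d ^ 2 / x / 16) * leadingTerm d (2 * x) := by
  have hexp : Real.exp (d - d ^ 2 / (4 * (4 * x))) =
      Real.exp (d ^ 2 / x / 16) * Real.exp (d - d ^ 2 / (4 * (2 * x))) := by
    rw [← Real.exp_add]
    ring_nf
  have hpow : (16 * (4 * x) / d) ^ d = 2 ^ d * (16 * (2 * x) / d) ^ d := by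
    rw [← mul_pow]
    ring_nf
  rw [leadingTerm, leadingTerm, hexp, hpow]
  ring

variable {d n : ℕ}

lemma le_of_pow_three_le_sq (h : d ^ 3 ≤ n ^ 2) : d ≤ n := by
  rcases d.eq_zero_or_pos with rfl | hd
  · exact n.zero_le
  · exact (Nat.pow_le_pow_iff_left two_ne_zero).mp
      ((Nat.pow_le_pow_right hd (by norm_num)).trans h)

lemma Q_harmonicPoly_le_leadingTerm (hd : d ≠ 0) (h : d ^ 3 ≤ n ^ 2) :
    Q (harmonicPoly d) n ≤ Real.exp 1 * leadingTerm d n := by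
  have hdn := le_of_pow_three_le_sq h
  have hn : (0 : ℝ) < n := by exact_mod_cast (by omega : 0 < n)
  have hρ : (0 : ℝ) < d / (16 * n) := by positivity
  have hρ' : (d : ℝ) / (16 * n) ≤ 1 / 16 := by
    rw [div_le_div_iff₀ (by positivity) (by norm_num)]
    exact_mod_cast (by omega : d * 16 ≤ 1 * (16 * n))
  have hcube : (d : ℝ) ^ 3 / n ^ 2 ≤ 1 := by
    rw [div_le_one (by positivity)]
    exact_mod_cast h
  have hexponent : n * (16 * (d / (16 * n)) - 64 * (d / (16 * n)) ^ 2 + 768 * (d / (16 * n)) ^ 3) =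
      d - d ^ 2 / (4 * n) + 3 / 16 * ((d : ℝ) ^ 3 / n ^ 2) := by
    field_simp
    ring
  calc Q (harmonicPoly d) n
      ≤ (1 + 16 * (d / (16 * n)) / (1 - 2 * (d / (16 * n))) ^ 2) ^ n / (d / (16 * n)) ^ d :=
        Q_harmonicPoly_le d n hρ (by linarith)
    _ ≤ Real.exp (16 * (d / (16 * n)) - 64 * (d / (16 * n)) ^ 2 + 768 * (d / (16 * n)) ^ 3) ^ n
          / (d / (16 * n)) ^ d := by gcongr; exact one_add_div_sq_le_exp_cubic hρ.le hρ'
    _ = (16 * n / d) ^ d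
          * Real.exp (d - d ^ 2 / (4 * n) + 3 / 16 * ((d : ℝ) ^ 3 / n ^ 2)) := by
        rw [← Real.exp_nat_mul, hexponent, div_eq_inv_mul, ← inv_pow, inv_div]
    _ ≤ (16 * n / d) ^ d * Real.exp (1 + (d - d ^ 2 / (4 * n))) := by
        gcongr ?_ * Real.exp ?_
        linarith
    _ = Real.exp 1 * leadingTerm d n := by
        rw [leadingTerm, Real.exp_add]
        ring

lemma leadingTerm_le_Q_harmonicPoly (hd : d ≠ 0) (h : d ^ 3 ≤ n ^ 2) :
    leadingTerm d n ≤ d * Real.exp 2 * Q (harmonicPoly d) n := by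
  have hdn := le_of_pow_three_le_sq h
  have hn : (0 : ℝ) < n := by exact_mod_cast (by omega : 0 < n)
  have hcube : (d : ℝ) ^ 3 / (2 * n) ^ 2 ≤ 1 := by
    rw [div_le_one (by positivity)]
    exact_mod_cast h.trans (Nat.pow_le_pow_left (by omega) 2)
  have hdesc := pow_mul_exp_le_descFactorial (d := d) (M := 2 * n) (by omega)
  rw [Nat.descFactorial_eq_factorial_mul_choose] at hdesc
  push_cast at hdesc
  calc leadingTerm d n
      ≤ (16 * n / d) ^ d * Real.exp (1 + d + (-(d ^ 2 / (2 * (2 * n))) - d ^ 3 / (2 * n) ^ 2)) := by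
        unfold leadingTerm
        gcongr
        have : (d : ℝ) ^ 2 / (2 * (2 * n)) = d ^ 2 / (4 * n) := by ring
        linarith
    _ = 8 ^ d / d ^ d * Real.exp (1 + d)
          * ((2 * n) ^ d * Real.exp (-(d ^ 2 / (2 * (2 * n))) - d ^ 3 / (2 * n) ^ 2)) := by
        rw [Real.exp_add, show (16 * n / d : ℝ) = 8 / d * (2 * n) by ring, mul_pow, div_pow]
        ring
    _ ≤ 8 ^ d / d ^ d * Real.exp (1 + d) * (d.factorial * (2 * n).choose d) := by gcongr
    _ ≤ 8 ^ d / d ^ d * Real.exp (1 + d)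
          * (d * d ^ d * Real.exp (1 - d) * (2 * n).choose d) := by
        gcongr
        exact factorial_le_mul_exp hd
    _ = d * Real.exp 2 * (8 ^ d * (2 * n).choose d) := by
        rw [show (2 : ℝ) = 1 + d + (1 - d) by ring, Real.exp_add (1 + d : ℝ)]
        field_simp
    _ ≤ d * Real.exp 2 * Q (harmonicPoly d) n := by
        gcongr
        exact choose_le_Q_harmonicPoly d n

lemma sqrt_Q_mul_Q_le (hd : d ≠ 0) (h : d ^ 3 ≤ n ^ 2) :
    √(Q (harmonicPoly d) n * Q (harmonicPoly d) (4 * n)) ≤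
      d * Real.exp (3 - d ^ 2 / n / 32) * Q (harmonicPoly d) (2 * n) := by
  have h₂ : d ^ 3 ≤ (2 * n) ^ 2 := h.trans (Nat.pow_le_pow_left (by omega) 2)
  have h₄ : d ^ 3 ≤ (4 * n) ^ 2 := h.trans (Nat.pow_le_pow_left (by omega) 2)
  have hdn := le_of_pow_three_le_sq h
  have hn : (0 : ℝ) < n := by exact_mod_cast (by omega : 0 < n)
  have hlower := leadingTerm_le_Q_harmonicPoly hd h₂
  have hupper := Q_harmonicPoly_le_leadingTerm hd h
  have hupper₄ := Q_harmonicPoly_le_leadingTerm hd h₄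
  push_cast at hlower hupper₄
  calc √(Q (harmonicPoly d) n * Q (harmonicPoly d) (4 * n))
      ≤ √(Real.exp 1 * leadingTerm d n * (Real.exp 1 * leadingTerm d (4 * n))) :=
        Real.sqrt_le_sqrt (mul_le_mul hupper hupper₄ (Q_nonneg _ _)
          ((Q_nonneg _ _).trans hupper))
    _ = Real.exp 1 * (leadingTerm d (2 * n) * Real.exp (-(d ^ 2 / n / 32))) := by
        rw [mul_mul_mul_comm, leadingTerm_mul_leadingTerm, ← pow_two, ← mul_pow]
        have := leadingTerm_pos d (mul_pos two_pos hn)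
        exact Real.sqrt_sq (by positivity)
    _ ≤ Real.exp 1 * (d * Real.exp 2 * Q (harmonicPoly d) (2 * n)
          * Real.exp (-(d ^ 2 / n / 32))) := by gcongr
    _ = d * Real.exp (3 - d ^ 2 / n / 32) * Q (harmonicPoly d) (2 * n) := by
        rw [show 3 - (d : ℝ) ^ 2 / n / 32 = 1 + 2 + -(d ^ 2 / n / 32) by ring, Real.exp_add,
          Real.exp_add]
        ring

lemma Q_four_mul_le (hd : d ≠ 0) (h : d ^ 3 ≤ n ^ 2) :
    Q (harmonicPoly d) (4 * n) ≤
      d * 2 ^ d * Real.exp (3 + d ^ 2 / n / 16) * Q (harmonicPoly d) (2 * n) := by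
  have hlower := leadingTerm_le_Q_harmonicPoly hd (h.trans (Nat.pow_le_pow_left (by omega) 2) :
    d ^ 3 ≤ (2 * n) ^ 2)
  have hupper := Q_harmonicPoly_le_leadingTerm hd (h.trans (Nat.pow_le_pow_left (by omega) 2) :
    d ^ 3 ≤ (4 * n) ^ 2)
  push_cast at hlower hupper
  calc Q (harmonicPoly d) (4 * n)
      ≤ Real.exp 1 * (2 ^ d * Real.exp (d ^ 2 / n / 16) * leadingTerm d (2 * n)) := by
        rwa [← leadingTerm_four_mul]
    _ ≤ Real.exp 1 * (2 ^ d * Real.exp (d ^ 2 / n / 16)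
          * (d * Real.exp 2 * Q (harmonicPoly d) (2 * n))) := by gcongr
    _ = d * 2 ^ d * Real.exp (3 + d ^ 2 / n / 16) * Q (harmonicPoly d) (2 * n) := by
        rw [show 3 + (d : ℝ) ^ 2 / n / 16 = 1 + 2 + d ^ 2 / n / 16 by ring, Real.exp_add,
          Real.exp_add]
        ring

lemma Q_harmonicPoly_pos (hdn : d ≤ 2 * n) : 0 < Q (harmonicPoly d) n := by
  have := Nat.choose_pos hdn
  exact lt_of_lt_of_le (by positivity) (choose_le_Q_harmonicPoly d n)

lemma mul_sqrt_add_lt_Q_two_mul (hd : d ≠ 0) (h : d ^ 3 ≤ n ^ 2) {A Y : ℝ} (hA : 0 ≤ A)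
    (hgain : 2 * A * d * Real.exp 3 ≤ Real.exp (d ^ 2 / n / 32))
    (herror : 2 * d * 2 ^ d * Real.exp (3 + d ^ 2 / n / 16) < Y) :
    A * √(Q (harmonicPoly d) n * Q (harmonicPoly d) (4 * n)) + Y⁻¹ * Q (harmonicPoly d) (4 * n) <
      Q (harmonicPoly d) (2 * n) := by
  have hpos : 0 < Q (harmonicPoly d) (2 * n) :=
    Q_harmonicPoly_pos ((le_of_pow_three_le_sq h).trans (by omega))
  have hY : 0 < Y := lt_of_le_of_lt (by positivity) herror
  have hmain : A * √(Q (harmonicPoly d) n * Q (harmonicPoly d) (4 * n)) ≤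
      Q (harmonicPoly d) (2 * n) / 2 := by
    calc A * √(Q (harmonicPoly d) n * Q (harmonicPoly d) (4 * n))
        ≤ A * (d * Real.exp (3 - d ^ 2 / n / 32) * Q (harmonicPoly d) (2 * n)) := by
          gcongr
          exact sqrt_Q_mul_Q_le hd h
      _ = 2 * A * d * Real.exp 3 / Real.exp (d ^ 2 / n / 32)
            * (Q (harmonicPoly d) (2 * n) / 2) := by
          rw [Real.exp_sub]
          ring
      _ ≤ Q (harmonicPoly d) (2 * n) / 2 :=
          mul_le_of_le_one_left (by positivity) ((div_le_one (Real.exp_pos _)).mpr hgain)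
  have herr : Y⁻¹ * Q (harmonicPoly d) (4 * n) < Q (harmonicPoly d) (2 * n) / 2 := by
    rw [inv_mul_lt_iff₀ hY]
    calc Q (harmonicPoly d) (4 * n)
        ≤ d * 2 ^ d * Real.exp (3 + d ^ 2 / n / 16) * Q (harmonicPoly d) (2 * n) :=
          Q_four_mul_le hd h
      _ = 2 * d * 2 ^ d * Real.exp (3 + d ^ 2 / n / 16) * (Q (harmonicPoly d) (2 * n) / 2) := by
          ring
      _ < Y * (Q (harmonicPoly d) (2 * n) / 2) := by gcongr
  linarith

end GrowthOfHarmonicPoly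

section Parameters

lemma two_mul_mul_two_pow_mul_exp_le {d : ℕ} {T : ℝ} (hd : 6 ≤ d) (hT : T ≤ d) :
    2 * d * 2 ^ d * Real.exp (3 + T / 16) ≤ (2 : ℝ) ^ (4 * d) := by
  have hd' : (6 : ℝ) ≤ d := by exact_mod_cast hd
  have htwo : (2 : ℝ) ≤ 2 ^ d := le_self_pow₀ one_le_two (by omega)
  have hself : (d : ℝ) ≤ 2 ^ d := by exact_mod_cast Nat.lt_two_pow_self.le
  have hexp : Real.exp (3 + T / 16) ≤ 2 ^ d := by
    rw [← Real.le_log_iff_exp_le (by positivity), Real.log_pow]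
    nlinarith [Real.log_two_gt_d9]
  calc 2 * d * 2 ^ d * Real.exp (3 + T / 16)
      ≤ (2 : ℝ) ^ d * 2 ^ d * 2 ^ d * 2 ^ d := by gcongr
    _ = (2 : ℝ) ^ (4 * d) := by ring

lemma eventually_mul_pow_le_exp_sq (a : ℝ) (k : ℕ) {b : ℝ} (hb : 0 < b) :
    ∀ᶠ L : ℕ in Filter.atTop, a * (L : ℝ) ^ k ≤ Real.exp (b * (L : ℝ) ^ 2) := by
  have hlim := (tendsto_exp_mul_div_rpow_atTop k b hb).comp tendsto_natCast_atTop_atTop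
  filter_upwards [hlim.eventually_ge_atTop a, Filter.eventually_ge_atTop 1] with L hL hL1
  have hL1 : (1 : ℝ) ≤ L := by exact_mod_cast hL1
  rw [Function.comp_apply, Real.rpow_natCast, le_div_iff₀ (by positivity)] at hL
  refine hL.trans ?_
  gcongr
  exact le_self_pow₀ hL1 two_ne_zero

lemma pow_le_rpow_half_add {L : ℝ} (hL : 1 ≤ L) {K : ℕ} {ε : ℝ} (hKε : 1 ≤ K * ε) :
    L ^ (K + 2) ≤ (L ^ (2 * K)) ^ ((1 : ℝ) / 2 + ε) := by
  rw [← Real.rpow_natCast, ← Real.rpow_natCast, ← Real.rpow_mul (by linarith)]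
  refine Real.rpow_le_rpow_of_exponent_le hL ?_
  push_cast
  linarith

lemma exists_degree_and_time {ε : ℝ} (hε : 0 < ε) (A : ℝ) (n₀ : ℕ) :
    ∃ d n : ℕ, n₀ < n ∧ d ≠ 0 ∧ d ^ 3 ≤ n ^ 2 ∧
      2 * A * d * Real.exp 3 ≤ Real.exp (d ^ 2 / n / 32) ∧
      2 * d * 2 ^ d * Real.exp (3 + d ^ 2 / n / 16) < (2 : ℝ) ^ ((n : ℝ) ^ ((1 : ℝ) / 2 + ε)) := by
  obtain ⟨K, hKε, hK⟩ : ∃ K : ℕ, 1 ≤ K * ε ∧ 3 ≤ K := by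
    have hlarge := tendsto_natCast_atTop_atTop.atTop_mul_const hε
    exact ((hlarge.eventually_ge_atTop 1).and (Filter.eventually_ge_atTop 3)).exists
  obtain ⟨L, hgain, hL5, hLn⟩ := ((eventually_mul_pow_le_exp_sq (2 * A * Real.exp 3) (K + 1)
    (by norm_num : (0 : ℝ) < 1 / 32)).and
      ((Filter.eventually_ge_atTop 5).and (Filter.eventually_gt_atTop n₀))).exists
  have hL : (5 : ℝ) ≤ L := by exact_mod_cast hL5
  have hratio : ((L ^ (K + 1) : ℕ) : ℝ) ^ 2 / (L ^ (2 * K) : ℕ) = (L : ℝ) ^ 2 := by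
    push_cast
    rw [div_eq_iff (by positivity)]
    ring
  refine ⟨L ^ (K + 1), L ^ (2 * K), hLn.trans_le (Nat.le_self_pow (by omega) L), by positivity,
    ?_, ?_, ?_⟩
  · rw [← pow_mul, ← pow_mul]
    exact Nat.pow_le_pow_right (by omega) (by omega)
  · rw [hratio]
    push_cast
    convert hgain using 1 <;> ring_nf
  · have hsq : L ^ 2 ≤ L ^ (K + 1) := Nat.pow_le_pow_right (by omega) (by omega)
    rw [hratio]
    calc _ ≤ (2 : ℝ) ^ (4 * L ^ (K + 1)) :=
          two_mul_mul_two_pow_mul_exp_le (by nlinarith only [hL5, hsq]) (by exact_mod_cast hsq)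
      _ < 2 ^ (L * L ^ (K + 1)) := by gcongr <;> linarith
      _ = (2 : ℝ) ^ ((L : ℝ) ^ (K + 2)) := by
          rw [← Real.rpow_natCast]
          push_cast
          ring_nf
      _ ≤ (2 : ℝ) ^ (((L ^ (2 * K) : ℕ) : ℝ) ^ ((1 : ℝ) / 2 + ε)) := by
          push_cast
          gcongr
          · exact one_le_two
          · exact pow_le_rpow_half_add (by linarith) hKε

end Parameters

theorem sharp_error :
    ∀ ε > (0 : ℝ), ∀ A > (0 : ℝ), ∀ n₀ : ℕ,
      ∃ u : ℤ × ℤ → ℂ, lap2 u = 0 ∧ ∃ n : ℕ, n > n₀ ∧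
        Q u (2 * n) > A * Real.sqrt (Q u n * Q u (4 * n)) +
          (2 : ℝ) ^ (-((n : ℝ) ^ ((1 : ℝ) / 2 + ε))) * Q u (4 * n) := by
  intro ε hε A hA n₀
  obtain ⟨d, n, hn, hd, hdn, hgain, herror⟩ := exists_degree_and_time hε A n₀
  refine ⟨harmonicPoly d, lap2_harmonicPoly d, n, hn, ?_⟩
  rw [Real.rpow_neg zero_le_two]
  exact mul_sqrt_add_lt_Q_two_mul hd hdn hA.le hgain herror
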